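/- arXiv:1206.5078 — 2 statements merged into one kernel-verified Lean document; each statement's English description precedes it below -/
import Mathlib

section
/- Let I ⊆ ℝ be an open interval, let G, c > 0 and k ∈ ℝ be constants, let a : I → ℝ be twice differentiable with a(t) > 0 on I, let φ : I → ℝ be three times differentiable, let ρ : I → ℝ be differentiable, and let p : I → ℝ. Suppose that for all t ∈ I the following three equations hold: (i) a'' = −(4πG/3)(ρ + 3p/c²)·a + (1/6)·φ''·a − (1/2)·a'·φ'; (ii) φ''' + 3(a'/a)·φ'' = 8πG(ρ' + 3(a'/a)·ρ + 3(a'/a)·p/c²); (iii) (a')² = (8πG/3)·a²·ρ − (1/3)·φ''·a² − k c². Then (a'(t))²·φ'(t) = 0 for all t ∈ I; in particular, φ'(t) = 0 at every t with a'(t) ≠ 0. -/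
open Real

/-- For a homogeneous isotropic (FLRW) universe, the reduced field equation (7.6),
the conservation law (7.8) and the constraint (7.9) of the new gravitational field
equations imply `(a')²·φ' = 0`, i.e. the scalar potential `φ` is constant wherever
`a' ≠ 0` (equation (7.10) of the paper). -/
theorem flrw_scalar_potential_constant
    (I : Set ℝ) (hIopen : IsOpen I) (hIconn : IsPreconnected I)
    (G c k : ℝ) (hG : 0 < G) (hc : 0 < c)
    (a a' a'' φ φ' φ'' φ''' ρ ρ' p : ℝ → ℝ)
    (ha : ∀ t ∈ I, HasDerivAt a (a' t) t)
    (ha' : ∀ t ∈ I, HasDerivAt a' (a'' t) t)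
    (hφ : ∀ t ∈ I, HasDerivAt φ (φ' t) t)
    (hφ' : ∀ t ∈ I, HasDerivAt φ' (φ'' t) t)
    (hφ'' : ∀ t ∈ I, HasDerivAt φ'' (φ''' t) t)
    (hρ : ∀ t ∈ I, HasDerivAt ρ (ρ' t) t)
    (hapos : ∀ t ∈ I, 0 < a t)
    (heq1 : ∀ t ∈ I, a'' t = -(4 * π * G / 3) * (ρ t + 3 * p t / c ^ 2) * a t
        + (1 / 6) * φ'' t * a t - (1 / 2) * a' t * φ' t)
    (heq2 : ∀ t ∈ I, φ''' t + 3 * (a' t / a t) * φ'' t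
        = 8 * π * G * (ρ' t + 3 * (a' t / a t) * ρ t + 3 * (a' t / a t) * p t / c ^ 2))
    (heq3 : ∀ t ∈ I, (a' t) ^ 2
        = (8 * π * G / 3) * (a t) ^ 2 * ρ t - (1 / 3) * φ'' t * (a t) ^ 2 - k * c ^ 2) :
    ∀ t ∈ I, (a' t) ^ 2 * φ' t = 0 := by
  intro t ht
  have hane : a t ≠ 0 := (hapos t ht).ne'
  have hL : HasDerivAt (fun s => (a' s) ^ 2) (2 * a' t * a'' t) t := by
    have h := (ha' t ht).fun_pow 2
    refine h.congr_deriv ?_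
    push_cast
    ring
  have hR : HasDerivAt (fun s => (8 * π * G / 3) * (a s) ^ 2 * ρ s
      - (1 / 3) * φ'' s * (a s) ^ 2 - k * c ^ 2)
      ((8 * π * G / 3) * (2 * a t * a' t * ρ t + (a t) ^ 2 * ρ' t)
      - (1 / 3) * (φ''' t * (a t) ^ 2 + φ'' t * (2 * a t * a' t))) t := by
    have hs := (ha t ht).fun_pow 2
    have h := (((hs.const_mul (8 * π * G / 3)).fun_mul (hρ t ht)).fun_sub
      (((hφ'' t ht).const_mul (1 / 3)).fun_mul hs)).sub_const (k * c ^ 2)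
    refine h.congr_deriv ?_
    push_cast
    ring
  have hE : (fun s => (a' s) ^ 2) =ᶠ[nhds t] (fun s => (8 * π * G / 3) * (a s) ^ 2 * ρ s
      - (1 / 3) * φ'' s * (a s) ^ 2 - k * c ^ 2) := by
    filter_upwards [hIopen.mem_nhds ht] with s hs using heq3 s hs
  have key := hL.unique (hR.congr_of_eventuallyEq hE)
  have h1 := heq1 t ht
  have h2 := heq2 t ht
  have hr : a' t / a t * a t = a' t := div_mul_cancel₀ _ hane
  generalize a' t / a t = r at h2 hr
  have hP1 : 3 * p t / c ^ 2 = 3 * (p t / c ^ 2) := by ring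
  have hP2 : 3 * r * p t / c ^ 2 = 3 * r * (p t / c ^ 2) := by ring
  rw [hP1] at h1
  rw [hP2] at h2
  generalize p t / c ^ 2 = P at h1 h2
  rw [← hr] at key h1 ⊢
  linear_combination 2 * r * a t * h1 + (a t) ^ 2 / 3 * h2 - key
end

section
/- Let J ⊆ (0, ∞) be an open interval, let m, c > 0, and let u, v, φ : J → ℝ be twice differentiable functions satisfying the three equations (E1): u'' + 2u'/r + (u'/2)(u'−v') = φ'' − (1/2)(u' + v' − 4/r)·φ', (E2): u'' − 2v'/r + (u'/2)(u'−v') = −φ'' + (1/2)(u' + v' + 4/r)·φ', and (E3): u' − v' + (2/r)(1 − e^{v}) = r·(φ'' + (1/2)(u'−v')·φ'). Define the gravitational potential ψ = (c²/2)(e^{u} − 1) and the interaction force F = −m·ψ'. Then at every r ∈ J with 1 + (r/2)φ'(r) ≠ 0 and 1 − (r/2)φ'(r) ≠ 0 one has F = (m c²/2)·e^{u}·[ −(1/(1 − (r/2)φ'))·(1/r)(e^{v} − 1) − r·φ'' / (1 − ((r/2)φ')²) ]. -/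
open Real

/-- Interaction force formula (6.10a): for the new gravitational field equations
(5.14)–(5.16) in a static spherically symmetric central field, the force
`F = −mψ'` on an object of mass `m`, where `ψ = (c²/2)(eᵘ − 1)` is the gravitational
potential, satisfies
`F = (mc²/2)eᵘ[ −(1/(1 − (r/2)φ'))·(1/r)(eᵛ − 1) − rφ''/(1 − ((r/2)φ')²) ]`. -/
theorem central_field_force_formula
    (J : Set ℝ) (hJopen : IsOpen J) (hJconn : IsPreconnected J) (hJ : J ⊆ Set.Ioi 0)
    (m c : ℝ) (hm : 0 < m) (hc : 0 < c)
    (u u' u'' v v' v'' φ φ' φ'' : ℝ → ℝ)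
    (hu : ∀ r ∈ J, HasDerivAt u (u' r) r)
    (hu' : ∀ r ∈ J, HasDerivAt u' (u'' r) r)
    (hv : ∀ r ∈ J, HasDerivAt v (v' r) r)
    (hv' : ∀ r ∈ J, HasDerivAt v' (v'' r) r)
    (hφ : ∀ r ∈ J, HasDerivAt φ (φ' r) r)
    (hφ' : ∀ r ∈ J, HasDerivAt φ' (φ'' r) r)
    (hE1 : ∀ r ∈ J, u'' r + 2 * u' r / r + (u' r / 2) * (u' r - v' r)
        = φ'' r - (1 / 2) * (u' r + v' r - 4 / r) * φ' r)
    (hE2 : ∀ r ∈ J, u'' r - 2 * v' r / r + (u' r / 2) * (u' r - v' r)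
        = -φ'' r + (1 / 2) * (u' r + v' r + 4 / r) * φ' r)
    (hE3 : ∀ r ∈ J, u' r - v' r + (2 / r) * (1 - Real.exp (v r))
        = r * (φ'' r + (1 / 2) * (u' r - v' r) * φ' r)) :
    ∀ r ∈ J, 1 + (r / 2) * φ' r ≠ 0 → 1 - (r / 2) * φ' r ≠ 0 →
      -m * deriv (fun s => (c ^ 2 / 2) * (Real.exp (u s) - 1)) r
        = (m * c ^ 2 / 2) * Real.exp (u r) *
          (-(1 / (1 - (r / 2) * φ' r)) * (1 / r) * (Real.exp (v r) - 1)
            - r * φ'' r / (1 - ((r / 2) * φ' r) ^ 2)) := by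
  intro r hr h1 h2
  have hr0 : r ≠ 0 := ne_of_gt (hJ hr)
  have hd : HasDerivAt (fun s => (c ^ 2 / 2) * (Real.exp (u s) - 1))
      ((c ^ 2 / 2) * (Real.exp (u r) * u' r)) r :=
    (((hu r hr).exp).sub_const 1).const_mul (c ^ 2 / 2)
  rw [hd.deriv]
  have e1 := hE1 r hr
  have e2 := hE2 r hr
  have e3 := hE3 r hr
  generalize u' r = a at *
  generalize v' r = b at *
  generalize φ' r = p at *
  generalize φ'' r = q at *
  generalize Real.exp (v r) = E at *
  have hi : r * r⁻¹ = 1 := mul_inv_cancel₀ hr0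
  have s1 : a + b = r * q / (1 + r / 2 * p) := by
    rw [eq_div_iff h1]
    simp only [div_eq_mul_inv] at e1 e2 ⊢
    linear_combination (r / 2) * (e1 - e2) - (a + b) * hi
  have s2 : a - b = (r * q + 2 * r⁻¹ * (E - 1)) / (1 - r / 2 * p) := by
    rw [eq_div_iff h2]
    simp only [div_eq_mul_inv] at e3 ⊢
    linear_combination e3
  have h3 : 1 - (r / 2 * p) ^ 2 = (1 + r / 2 * p) * (1 - r / 2 * p) := by ring
  have s3 : a = 1 / (1 - r / 2 * p) * (1 / r) * (E - 1) + r * q / (1 - (r / 2 * p) ^ 2) := by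
    have : a = (r * q / (1 + r / 2 * p) + (r * q + 2 * r⁻¹ * (E - 1)) / (1 - r / 2 * p)) / 2 := by
      rw [← s1, ← s2]; ring
    rw [this, h3]
    clear s1 s2 this h3 e1 e2 e3 hi
    have hp : r / 2 * p = r * p / 2 := by ring
    generalize r / 2 * p = t at *
    field_simp
    ring
  linear_combination (-(m * c ^ 2 / 2) * Real.exp (u r)) * s3
end
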